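/- arXiv:1810.09129 — 2 statements merged into one kernel-verified Lean document; each statement's English description precedes it below -/
import Mathlib

section
/- Let L be a Lie superalgebra over a field of characteristic not 2 or 3 with dim(L/Z(L)) = (m | n), where Z(L) is the center. Then dim L' ≤ (1/2)[(m+n)^2 + (n-m)], where L' = [L,L] is the derived subalgebra. -/
/-!
The bracket factors through `L/Z(L)`: the center is stable under the grading involution, hence is
spanned by homogeneous elements, and these annihilate `L` on both sides. Write `L/Z(L)` as the sum
of its even part `E`, of dimension `m`, and its odd part `O`, of dimension `n`. By graded
skew-symmetry `L' = [E, E] + [E, O] + [O, O]`. The bracket is alternating on `E` and symmetric on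
`O`, so the three summands have dimension at most `m.choose 2`, `m * n` and `(n + 1).choose 2`,
and these numbers add up to `((m + n) ^ 2 + (n - m)) / 2`.
-/

open Module Function TensorProduct

/-- A Lie superalgebra over a field `K`, encoded via a grading involution `J`
(the even part is the `+1`-eigenspace, the odd part the `-1`-eigenspace),
a bilinear bracket `br` satisfying graded skew-symmetry and the graded
Jacobi identity on homogeneous elements. -/
structure SuperLie (K : Type) [Field K] : Type 1 where
  carrier : Type
  [acg : AddCommGroup carrier]
  [mod : Module K carrier]
  J : carrier →ₗ[K] carrier
  br : carrier →ₗ[K] carrier →ₗ[K] carrier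
  J_inv : ∀ x, J (J x) = x
  J_br : ∀ x y, J (br x y) = br (J x) (J y)
  skew_e : ∀ x y, J x = x → br x y = - br y x
  skew_o : ∀ x y, J x = -x → J y = -y → br x y = br y x
  jacobi : ∀ (a b c : Bool) (x y z : carrier),
    J x = (if a then -x else x) → J y = (if b then -y else y) →
    J z = (if c then -z else z) →
    (if a && c then (-1 : K) else 1) • br x (br y z)
      + (if b && a then (-1 : K) else 1) • br y (br z x)
      + (if c && b then (-1 : K) else 1) • br z (br x y) = 0

attribute [instance] SuperLie.acg SuperLie.mod

namespace SuperLie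

variable {K : Type} [Field K]

/-- The even part `L₀`. -/
def evenPart (A : SuperLie K) : Submodule K A.carrier :=
  LinearMap.ker (A.J - LinearMap.id)

/-- The odd part `L₁`. -/
def oddPart (A : SuperLie K) : Submodule K A.carrier :=
  LinearMap.ker (A.J + LinearMap.id)

/-- The center `Z(L) = {z | [z,x] = 0 for all x}`. -/
def center (A : SuperLie K) : Submodule K A.carrier :=
  ⨅ y, LinearMap.ker (A.br.flip y)

/-- The derived subalgebra `L' = [L,L]`. -/
def derived (A : SuperLie K) : Submodule K A.carrier :=
  Submodule.span K {z | ∃ x y, A.br x y = z}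

/-- The descending central series `C⁰(L) = L`, `C^{k+1}(L) = [C^k(L), L]`. -/
def lcs (A : SuperLie K) : ℕ → Submodule K A.carrier
  | 0 => ⊤
  | (k+1) => Submodule.span K {z | ∃ x ∈ lcs A k, ∃ y, A.br x y = z}

/-- The second center `Z₂(L)`: those `x` with `[x,y] ∈ Z(L)` for all `y`. -/
def Z2 (A : SuperLie K) : Submodule K A.carrier :=
  ⨅ y, Submodule.comap (A.br.flip y) A.center

/-- Nilpotency: the descending central series terminates at zero. -/
def IsNilpotent (A : SuperLie K) : Prop := ∃ k, A.lcs k = ⊥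

/-- Abelian: identically vanishing bracket. -/
def IsAbelian (A : SuperLie K) : Prop := ∀ x y, A.br x y = 0

/-- A homomorphism of Lie superalgebras: an even linear map commuting with the
grading and preserving brackets. -/
structure Hom (A B : SuperLie K) where
  toLin : A.carrier →ₗ[K] B.carrier
  map_J : ∀ x, toLin (A.J x) = B.J (toLin x)
  map_br : ∀ x y, toLin (A.br x y) = B.br (toLin x) (toLin y)

/-- The dimension of the Schur multiplier `M(A)`, characterized as the maximal
dimension of the kernel of a stem extension `0 → M → B → A → 0`
(i.e. `M = ker f ⊆ Z(B) ∩ B'`); a stem extension of maximal dimension is a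
stem cover, whose kernel is isomorphic to the Schur multiplier
`M(A) = ([F,F] ∩ R)/[F,R]` coming from any free presentation `0 → R → F → A → 0`. -/
noncomputable def multDim (A : SuperLie K) : ℕ :=
  sSup {d | ∃ (B : SuperLie K) (f : Hom B A),
    Surjective f.toLin ∧
    LinearMap.ker f.toLin ≤ B.center ⊓ B.derived ∧
    finrank K (LinearMap.ker f.toLin) = d}

/-- `A ≅ H(0,1)`: basis `z` (even), `y` (odd), `[y,y] = z`, `z` central. -/
def IsH01 (A : SuperLie K) : Prop :=
  ∃ z y : A.carrier, z ∈ A.evenPart ∧ y ∈ A.oddPart ∧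
    LinearIndependent K ![z, y] ∧
    Submodule.span K ({z, y} : Set A.carrier) = ⊤ ∧
    A.br y y = z ∧ z ∈ A.center

/-- `A ≅ H(1,0)`: the purely even 3-dimensional Heisenberg algebra. -/
def IsH10 (A : SuperLie K) : Prop :=
  ∃ x y z : A.carrier, x ∈ A.evenPart ∧ y ∈ A.evenPart ∧ z ∈ A.evenPart ∧
    LinearIndependent K ![x, y, z] ∧
    Submodule.span K ({x, y, z} : Set A.carrier) = ⊤ ∧
    A.br x y = z ∧ z ∈ A.center

/-- `A ≅ H(0,2)`: even basis `{z}`, odd basis `{y₁,y₂}`, `[yᵢ,yᵢ] = z`. -/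
def IsH02 (A : SuperLie K) : Prop :=
  ∃ z y₁ y₂ : A.carrier, z ∈ A.evenPart ∧ y₁ ∈ A.oddPart ∧ y₂ ∈ A.oddPart ∧
    LinearIndependent K ![z, y₁, y₂] ∧
    Submodule.span K ({z, y₁, y₂} : Set A.carrier) = ⊤ ∧
    A.br y₁ y₁ = z ∧ A.br y₂ y₂ = z ∧ A.br y₁ y₂ = 0 ∧ z ∈ A.center

/-- `A ≅ H₁`: even basis `{x}`, odd basis `{y,z}`, `[x,y] = z`, `z` central. -/
def IsHodd1 (A : SuperLie K) : Prop :=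
  ∃ x y z : A.carrier, x ∈ A.evenPart ∧ y ∈ A.oddPart ∧ z ∈ A.oddPart ∧
    LinearIndependent K ![x, y, z] ∧
    Submodule.span K ({x, y, z} : Set A.carrier) = ⊤ ∧
    A.br x y = z ∧ A.br y y = 0 ∧ z ∈ A.center

/-- `A ≅ H(p,q)`: the special Heisenberg Lie superalgebra with even center,
of superdimension `(2p+1 | q)`: even basis `x₁,…,x_{2p}, z` with
`[xᵢ, x_{p+i}] = z`, odd basis `y₁,…,y_q` with `[yⱼ,yⱼ] = z`, `z` central. -/
def IsHeisEven (A : SuperLie K) (p q : ℕ) : Prop :=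
  ∃ (x : Fin (2*p) → A.carrier) (y : Fin q → A.carrier) (z : A.carrier),
    (∀ i, x i ∈ A.evenPart) ∧ (∀ j, y j ∈ A.oddPart) ∧ z ∈ A.evenPart ∧
    LinearIndependent K (Sum.elim x (Sum.elim y (fun _ : Fin 1 => z))) ∧
    Submodule.span K (Set.range (Sum.elim x (Sum.elim y (fun _ : Fin 1 => z)))) = ⊤ ∧
    (∀ i j : Fin (2*p), A.br (x i) (x j) =
      if (j : ℕ) = (i : ℕ) + p then z else if (i : ℕ) = (j : ℕ) + p then -z else 0) ∧
    (∀ i j : Fin q, A.br (y i) (y j) = if i = j then z else 0) ∧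
    (∀ i j, A.br (x i) (y j) = 0) ∧ z ∈ A.center

/-- `A ≅ H_p`: the special Heisenberg Lie superalgebra with odd center, of
superdimension `(p | p+1)`: even basis `x₁,…,x_p`, odd basis `y₁,…,y_p, z`,
with `[xᵢ, yᵢ] = z` and `z` central. -/
def IsHeisOdd (A : SuperLie K) (p : ℕ) : Prop :=
  ∃ (x : Fin p → A.carrier) (y : Fin p → A.carrier) (z : A.carrier),
    (∀ i, x i ∈ A.evenPart) ∧ (∀ j, y j ∈ A.oddPart) ∧ z ∈ A.oddPart ∧
    LinearIndependent K (Sum.elim x (Sum.elim y (fun _ : Fin 1 => z))) ∧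
    Submodule.span K (Set.range (Sum.elim x (Sum.elim y (fun _ : Fin 1 => z)))) = ⊤ ∧
    (∀ i j : Fin p, A.br (x i) (x j) = 0) ∧
    (∀ i j : Fin p, A.br (y i) (y j) = 0) ∧
    (∀ i j : Fin p, A.br (x i) (y j) = if i = j then z else 0) ∧ z ∈ A.center

/-- `A ≅ H(p,q) ⊕ A(a|b)`: direct sum of the special Heisenberg Lie
superalgebra with even center and an abelian superalgebra of superdimension
`(a|b)` (central basis vectors `u₁,…,u_a` even and `v₁,…,v_b` odd). -/
def IsHeisEvenSum (A : SuperLie K) (p q a b : ℕ) : Prop :=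
  ∃ (x : Fin (2*p) → A.carrier) (y : Fin q → A.carrier) (z : A.carrier)
    (u : Fin a → A.carrier) (v : Fin b → A.carrier),
    (∀ i, x i ∈ A.evenPart) ∧ (∀ j, y j ∈ A.oddPart) ∧ z ∈ A.evenPart ∧
    (∀ i, u i ∈ A.evenPart) ∧ (∀ j, v j ∈ A.oddPart) ∧
    LinearIndependent K
      (Sum.elim x (Sum.elim y (Sum.elim (fun _ : Fin 1 => z) (Sum.elim u v)))) ∧
    Submodule.span K (Set.range
      (Sum.elim x (Sum.elim y (Sum.elim (fun _ : Fin 1 => z) (Sum.elim u v))))) = ⊤ ∧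
    (∀ i j : Fin (2*p), A.br (x i) (x j) =
      if (j : ℕ) = (i : ℕ) + p then z else if (i : ℕ) = (j : ℕ) + p then -z else 0) ∧
    (∀ i j : Fin q, A.br (y i) (y j) = if i = j then z else 0) ∧
    (∀ i j, A.br (x i) (y j) = 0) ∧ z ∈ A.center ∧
    (∀ i, u i ∈ A.center) ∧ (∀ j, v j ∈ A.center)

/-- `A ≅ H_p ⊕ A(a|b)`: direct sum of the special Heisenberg Lie superalgebra
with odd center and an abelian superalgebra of superdimension `(a|b)`. -/
def IsHeisOddSum (A : SuperLie K) (p a b : ℕ) : Prop :=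
  ∃ (x : Fin p → A.carrier) (y : Fin p → A.carrier) (z : A.carrier)
    (u : Fin a → A.carrier) (v : Fin b → A.carrier),
    (∀ i, x i ∈ A.evenPart) ∧ (∀ j, y j ∈ A.oddPart) ∧ z ∈ A.oddPart ∧
    (∀ i, u i ∈ A.evenPart) ∧ (∀ j, v j ∈ A.oddPart) ∧
    LinearIndependent K
      (Sum.elim x (Sum.elim y (Sum.elim (fun _ : Fin 1 => z) (Sum.elim u v)))) ∧
    Submodule.span K (Set.range
      (Sum.elim x (Sum.elim y (Sum.elim (fun _ : Fin 1 => z) (Sum.elim u v))))) = ⊤ ∧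
    (∀ i j : Fin p, A.br (x i) (x j) = 0) ∧
    (∀ i j : Fin p, A.br (y i) (y j) = 0) ∧
    (∀ i j : Fin p, A.br (x i) (y j) = if i = j then z else 0) ∧ z ∈ A.center ∧
    (∀ i, u i ∈ A.center) ∧ (∀ j, v j ∈ A.center)

/-- `A ≅ L_{4,0}`: purely even filiform algebra, basis `x,y,z,w`,
`[x,y] = z`, `[y,z] = w`, all other basis brackets zero. -/
def IsL40 (A : SuperLie K) : Prop :=
  ∃ x y z w : A.carrier,
    x ∈ A.evenPart ∧ y ∈ A.evenPart ∧ z ∈ A.evenPart ∧ w ∈ A.evenPart ∧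
    LinearIndependent K ![x, y, z, w] ∧
    Submodule.span K ({x, y, z, w} : Set A.carrier) = ⊤ ∧
    A.br x y = z ∧ A.br y z = w ∧ A.br x z = 0 ∧
    A.br x w = 0 ∧ A.br y w = 0 ∧ A.br z w = 0

/-- `A ≅ L_{5,0}^2`: purely even, basis `x,y,z,v,w`, `[x,y] = v`, `[y,z] = w`,
with `v, w` central and all other basis brackets zero. -/
def IsL502 (A : SuperLie K) : Prop :=
  ∃ x y z v w : A.carrier,
    x ∈ A.evenPart ∧ y ∈ A.evenPart ∧ z ∈ A.evenPart ∧
    v ∈ A.evenPart ∧ w ∈ A.evenPart ∧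
    LinearIndependent K ![x, y, z, v, w] ∧
    Submodule.span K ({x, y, z, v, w} : Set A.carrier) = ⊤ ∧
    A.br x y = v ∧ A.br y z = w ∧ A.br x z = 0 ∧
    v ∈ A.center ∧ w ∈ A.center

end SuperLie

open SuperLie

section BilinearMaps

variable {K V V' W : Type*} [Field K] [AddCommGroup V] [Module K V] [AddCommGroup V']
  [Module K V'] [AddCommGroup W] [Module K W] {B : V →ₗ[K] V →ₗ[K] W} {E O : Submodule K V}

theorem exists_fin_finrank_span_range_eq (E : Submodule K V) [Module.Finite K E] :
    ∃ v : Fin (finrank K E) → V, Submodule.span K (Set.range v) = E := by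
  refine ⟨E.subtype ∘ finBasis K E, ?_⟩
  rw [Set.range_comp, Submodule.span_image, Basis.span_eq, Submodule.map_subtype_top]

theorem finrank_map₂_le_card_of_span_range_eq {ι ι' κ : Type*} [Fintype κ]
    {B : V →ₗ[K] V' →ₗ[K] W} {P : Submodule K V} {Q : Submodule K V'}
    {v : ι → V} {v' : ι' → V'} {u : κ → W}
    (hv : Submodule.span K (Set.range v) = P) (hv' : Submodule.span K (Set.range v') = Q)
    (hu : ∀ i j, B (v i) (v' j) ∈ Submodule.span K (Set.range u)) :
    finrank K (Submodule.map₂ B P Q) ≤ Fintype.card κ := by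
  have := FiniteDimensional.span_of_finite K (Set.finite_range u)
  refine (Submodule.finrank_mono ?_).trans (finrank_range_le_card u)
  rw [← hv, ← hv', Submodule.map₂_span_span, Submodule.span_le]
  rintro _ ⟨_, ⟨i, rfl⟩, _, ⟨j, rfl⟩, rfl⟩
  exact hu i j

theorem finrank_map₂_le_mul (B : V →ₗ[K] V' →ₗ[K] W) (P : Submodule K V) (Q : Submodule K V')
    [Module.Finite K P] [Module.Finite K Q] :
    finrank K (Submodule.map₂ B P Q) ≤ finrank K P * finrank K Q := by
  rw [TensorProduct.map₂_eq_range_lift_comp_mapIncl, ← finrank_tensorProduct]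
  exact LinearMap.finrank_range_le _

theorem finrank_map₂_self_le_of_symm [Module.Finite K E]
    (hB : ∀ x ∈ E, ∀ y ∈ E, B x y = B y x) :
    finrank K (Submodule.map₂ B E E) ≤ (finrank K E + 1).choose 2 := by
  obtain ⟨v, hv⟩ := exists_fin_finrank_span_range_eq E
  have hvE (i) : v i ∈ E := hv ▸ Submodule.subset_span ⟨i, rfl⟩
  let u : Sym2 (Fin (finrank K E)) → W :=
    Sym2.lift ⟨fun i j => B (v i) (v j), fun i j => hB _ (hvE i) _ (hvE j)⟩
  have hu (i j) : B (v i) (v j) ∈ Submodule.span K (Set.range u) :=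
    Submodule.subset_span ⟨s(i, j), rfl⟩
  simpa only [Sym2.card, Fintype.card_fin] using finrank_map₂_le_card_of_span_range_eq hv hv hu

theorem finrank_map₂_self_le_of_alt [Module.Finite K E] (hB : ∀ x ∈ E, B x x = 0) :
    finrank K (Submodule.map₂ B E E) ≤ (finrank K E).choose 2 := by
  obtain ⟨v, hv⟩ := exists_fin_finrank_span_range_eq E
  have hvE (i) : v i ∈ E := hv ▸ Submodule.subset_span ⟨i, rfl⟩
  have hskew (i j) : -B (v j) (v i) = B (v i) (v j) :=
    have hE : (B.domRestrict₁₂ E E).IsAlt := fun x => hB x x.2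
    hE.neg ⟨v j, hvE j⟩ ⟨v i, hvE i⟩
  let u : {p : Sym2 (Fin (finrank K E)) // ¬ p.IsDiag} → W := fun p => B (v p.1.inf) (v p.1.sup)
  have hlt {i j} (hij : i < j) : B (v i) (v j) ∈ Submodule.span K (Set.range u) :=
    Submodule.subset_span ⟨⟨s(i, j), by simpa using hij.ne⟩, by
      simp only [u, Sym2.inf_mk, Sym2.sup_mk, inf_of_le_left hij.le, sup_of_le_right hij.le]⟩
  have hu (i j) : B (v i) (v j) ∈ Submodule.span K (Set.range u) := by
    rcases lt_trichotomy i j with hij | rfl | hji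
    · exact hlt hij
    · exact hB _ (hvE i) ▸ Submodule.zero_mem _
    · exact hskew i j ▸ Submodule.neg_mem _ (hlt hji)
  simpa only [Sym2.card_subtype_not_diag, Fintype.card_fin] using
    finrank_map₂_le_card_of_span_range_eq hv hv hu

theorem map₂_liftQ₂_map_mkQ (B : V →ₗ[K] V' →ₗ[K] W) {Z : Submodule K V} {Z' : Submodule K V'}
    (hl : Z ≤ B.ker) (hr : Z' ≤ B.flip.ker) (P : Submodule K V) (Q : Submodule K V') :
    Submodule.map₂ (B.liftQ₂ Z Z' hl hr) (P.map Z.mkQ) (Q.map Z'.mkQ) = Submodule.map₂ B P Q := by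
  rw [Submodule.map₂_map_map]
  rfl

/-- `B` is graded skew-symmetric with respect to an even part `E` and an odd part `O`: this
is what the dimension count needs from a Lie superalgebra bracket, and it survives the passage to a
quotient by the radical. The target carries no grading, and on `E` the map is required to be
alternating rather than skew-symmetric, since in characteristic two the latter is weaker. -/
structure IsSuperAlt (B : V →ₗ[K] V →ₗ[K] W) (E O : Submodule K V) : Prop where
  even_self : ∀ x ∈ E, B x x = 0
  odd_even : ∀ y ∈ O, ∀ x ∈ E, B y x = -B x y
  odd_symm : ∀ x ∈ O, ∀ y ∈ O, B x y = B y x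

namespace IsSuperAlt

theorem map₂_sup_self (h : IsSuperAlt B E O) :
    Submodule.map₂ B (E ⊔ O) (E ⊔ O) =
      Submodule.map₂ B E E ⊔ Submodule.map₂ B E O ⊔ Submodule.map₂ B O O := by
  have hOE : Submodule.map₂ B O E ≤ Submodule.map₂ B E O := Submodule.map₂_le.mpr fun y hy x hx =>
    h.odd_even y hy x hx ▸ Submodule.neg_mem _ (Submodule.apply_mem_map₂ B hx hy)
  rw [Submodule.map₂_sup_left, Submodule.map₂_sup_right, Submodule.map₂_sup_right, ← sup_assoc,
    sup_assoc (Submodule.map₂ B E E), sup_eq_left.mpr hOE]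

theorem finrank_map₂_sup_self_le [Module.Finite K E] [Module.Finite K O] (h : IsSuperAlt B E O) :
    finrank K (Submodule.map₂ B (E ⊔ O) (E ⊔ O)) ≤
      (finrank K E).choose 2 + finrank K E * finrank K O + (finrank K O + 1).choose 2 := by
  have hE : E.FG := Module.Finite.iff_fg.mp ‹_›
  have hO : O.FG := Module.Finite.iff_fg.mp ‹_›
  have := Module.Finite.iff_fg.mpr (hE.map₂ B hE)
  have := Module.Finite.iff_fg.mpr (hE.map₂ B hO)
  have := Module.Finite.iff_fg.mpr (hO.map₂ B hO)
  rw [h.map₂_sup_self]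
  calc _ ≤ finrank K (Submodule.map₂ B E E) + finrank K (Submodule.map₂ B E O) +
        finrank K (Submodule.map₂ B O O) :=
      (Submodule.finrank_add_le_finrank_add_finrank _ _).trans
        (Nat.add_le_add_right (Submodule.finrank_add_le_finrank_add_finrank _ _) _)
    _ ≤ _ := add_le_add_three (finrank_map₂_self_le_of_alt h.even_self)
      (finrank_map₂_le_mul B E O) (finrank_map₂_self_le_of_symm h.odd_symm)

theorem liftQ₂ (h : IsSuperAlt B E O) {Z : Submodule K V} (hl : Z ≤ B.ker) (hr : Z ≤ B.flip.ker) :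
    IsSuperAlt (B.liftQ₂ Z Z hl hr) (E.map Z.mkQ) (O.map Z.mkQ) where
  even_self := by
    rintro _ ⟨x, hx, rfl⟩
    exact h.even_self x hx
  odd_even := by
    rintro _ ⟨y, hy, rfl⟩ _ ⟨x, hx, rfl⟩
    exact h.odd_even y hy x hx
  odd_symm := by
    rintro _ ⟨x, hx, rfl⟩ _ ⟨y, hy, rfl⟩
    exact h.odd_symm x hx y hy

end IsSuperAlt

end BilinearMaps

theorem two_mul_choose_add_mul_add_choose (m n : ℕ) :
    2 * ((m.choose 2 + m * n + (n + 1).choose 2 : ℕ) : ℤ) = ((m : ℤ) + n) ^ 2 + (n - m) := by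
  have hQ : 2 * ((m.choose 2 + m * n + (n + 1).choose 2 : ℕ) : ℚ) =
      ((m : ℚ) + n) ^ 2 + (n - m) := by
    push_cast [Nat.cast_choose_two]
    ring
  exact_mod_cast hQ

namespace SuperLie

variable {K : Type} [Field K] {A : SuperLie K} {x z : A.carrier}

theorem mem_evenPart : x ∈ A.evenPart ↔ A.J x = x := by
  simp [evenPart, sub_eq_zero]

theorem mem_oddPart : x ∈ A.oddPart ↔ A.J x = -x := by
  simp [oddPart, add_eq_zero_iff_eq_neg]

theorem mem_center : z ∈ A.center ↔ ∀ y, A.br z y = 0 := by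
  simp [center]

theorem center_eq_ker_br : A.center = A.br.ker := by
  ext z
  simp [mem_center, LinearMap.ext_iff]

theorem derived_eq_map₂_br : A.derived = Submodule.map₂ A.br ⊤ ⊤ := by
  simp only [derived, Submodule.map₂_eq_span_image2, Set.image2, Submodule.mem_top, true_and,
    SetLike.mem_coe]

theorem inf_evenPart_sup_inf_oddPart (h2 : (2 : K) ≠ 0) {P : Submodule K A.carrier}
    (hP : ∀ x ∈ P, A.J x ∈ P) : P ⊓ A.evenPart ⊔ P ⊓ A.oddPart = P := by
  refine le_antisymm (sup_le inf_le_left inf_le_left) fun x hx => Submodule.mem_sup.mpr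
    ⟨(2⁻¹ : K) • (x + A.J x), ⟨P.smul_mem _ (P.add_mem hx (hP x hx)), mem_evenPart.mpr ?_⟩,
      (2⁻¹ : K) • (x - A.J x), ⟨P.smul_mem _ (P.sub_mem hx (hP x hx)), mem_oddPart.mpr ?_⟩, ?_⟩
  · rw [map_smul, map_add, A.J_inv, add_comm]
  · rw [map_smul, map_sub, A.J_inv, ← smul_neg, neg_sub]
  · rw [← smul_add, add_add_sub_cancel, ← two_smul K, inv_smul_smul₀ h2]

theorem evenPart_sup_oddPart (h2 : (2 : K) ≠ 0) : A.evenPart ⊔ A.oddPart = ⊤ := by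
  simpa only [top_inf_eq] using
    inf_evenPart_sup_inf_oddPart h2 (P := ⊤) fun _ _ => Submodule.mem_top

theorem J_mem_center (hz : z ∈ A.center) : A.J z ∈ A.center := mem_center.mpr fun y => by
  rw [← A.J_inv y, ← A.J_br, mem_center.mp hz, map_zero]

theorem isSuperAlt_br (h2 : (2 : K) ≠ 0) : IsSuperAlt A.br A.evenPart A.oddPart where
  even_self x hx := by
    have := A.skew_e x x (mem_evenPart.mp hx)
    rw [eq_neg_iff_add_eq_zero, ← two_smul K] at this
    exact (smul_eq_zero.mp this).resolve_left h2
  odd_even y _ x hx := (neg_eq_iff_eq_neg.mpr (A.skew_e x y (mem_evenPart.mp hx))).symm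
  odd_symm x hx y hy := A.skew_o x y (mem_oddPart.mp hx) (mem_oddPart.mp hy)

theorem center_le_ker_flip_br (h2 : (2 : K) ≠ 0) : A.center ≤ A.br.flip.ker := by
  rw [← inf_evenPart_sup_inf_oddPart h2 fun z hz => J_mem_center hz]
  refine sup_le ?_ ?_
  · rintro z ⟨hz, hze⟩
    ext y
    have := A.skew_e z y (mem_evenPart.mp hze)
    rwa [mem_center.mp hz, zero_eq_neg] at this
  · rintro z ⟨hz, hzo⟩
    suffices A.evenPart ⊔ A.oddPart ≤ (A.br.flip z).ker by
      rw [evenPart_sup_oddPart h2, top_le_iff] at this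
      exact LinearMap.ker_eq_top.mp this
    refine sup_le (fun x hx => ?_) fun y hy => ?_
    · change A.br x z = 0
      rw [A.skew_e x z (mem_evenPart.mp hx), mem_center.mp hz, neg_zero]
    · change A.br y z = 0
      rw [A.skew_o y z (mem_oddPart.mp hy) (mem_oddPart.mp hzo), mem_center.mp hz]

/-- The bracket of `L` viewed as a bilinear map `L/Z(L) × L/Z(L) → L`. -/
def brModCenter (A : SuperLie K) (h2 : (2 : K) ≠ 0) :
    A.carrier ⧸ A.center →ₗ[K] A.carrier ⧸ A.center →ₗ[K] A.carrier :=
  A.br.liftQ₂ A.center A.center center_eq_ker_br.le (center_le_ker_flip_br h2)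

theorem isSuperAlt_brModCenter (h2 : (2 : K) ≠ 0) :
    IsSuperAlt (A.brModCenter h2) (A.evenPart.map A.center.mkQ) (A.oddPart.map A.center.mkQ) :=
  (isSuperAlt_br h2).liftQ₂ _ _

theorem map_mkQ_evenPart_sup_map_mkQ_oddPart (h2 : (2 : K) ≠ 0) :
    A.evenPart.map A.center.mkQ ⊔ A.oddPart.map A.center.mkQ = ⊤ := by
  rw [← Submodule.map_sup, evenPart_sup_oddPart h2, Submodule.map_top, Submodule.range_mkQ]

theorem derived_eq_map₂_brModCenter (h2 : (2 : K) ≠ 0) :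
    A.derived = Submodule.map₂ (A.brModCenter h2) ⊤ ⊤ := by
  rw [derived_eq_map₂_br, ← Submodule.range_mkQ A.center, ← Submodule.map_top,
    brModCenter, map₂_liftQ₂_map_mkQ]

end SuperLie

theorem stmt0_general {K : Type} [Field K] (h2 : (2 : K) ≠ 0)
    (A : SuperLie K) [FiniteDimensional K (A.carrier ⧸ A.center)] (m n : ℕ)
    (hm : m = finrank K (A.evenPart.map A.center.mkQ))
    (hn : n = finrank K (A.oddPart.map A.center.mkQ)) :
    FiniteDimensional K A.derived ∧
      2 * (finrank K A.derived : ℤ) ≤ ((m : ℤ) + n) ^ 2 + (n - m) := by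
  have hfg : (⊤ : Submodule K (A.carrier ⧸ A.center)).FG := Module.Finite.fg_top
  have hle := (isSuperAlt_brModCenter (A := A) h2).finrank_map₂_sup_self_le
  rw [map_mkQ_evenPart_sup_map_mkQ_oddPart h2, ← derived_eq_map₂_brModCenter, ← hm, ← hn] at hle
  refine ⟨derived_eq_map₂_brModCenter h2 ▸ Module.Finite.iff_fg.mpr (hfg.map₂ _ hfg), ?_⟩
  rw [← two_mul_choose_add_mul_add_choose]
  exact_mod_cast Nat.mul_le_mul_left 2 hle

/-- If `dim(L/Z(L)) = (m|n)` then `dim L' ≤ ½[(m+n)² + (n-m)]`. -/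
theorem stmt0 {K : Type} [Field K] (h2 : (2 : K) ≠ 0) (h3 : (3 : K) ≠ 0)
    (A : SuperLie K) [FiniteDimensional K A.carrier] (m n : ℕ)
    (hm : m = finrank K (A.evenPart.map A.center.mkQ))
    (hn : n = finrank K (A.oddPart.map A.center.mkQ)) :
    2 * (finrank K A.derived : ℤ) ≤ ((m : ℤ) + n)^2 + (n - m) :=
  (stmt0_general h2 A m n hm hn).2
end

section
/- Let L be a nilpotent Lie superalgebra of dimension (4 | 0) with dim Z(L) = 1 and dim L' = 2, over a field of characteristic ≠ 2,3. Then L ≅ L_{4,0}, the Lie algebra with basis x, y, z, w and nonzero brackets [x,y] = z, [y,z] = w. -/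
open Module Function TensorProduct

open SuperLie

/-!
Write `C¹ ⊇ C² ⊇ C³` for the terms of the descending central series, so that `C¹ = L'`. If `x, y`
span `L` modulo `C¹` and `z = [x, y]`, then `C¹ = Kz + C²` and `C² ⊆ K[z, x] + K[z, y] + C³`. Since
`L` is nilpotent and `dim C¹ = 2`, we have `dim C² ≤ 1` and `C³ = 0`. Hence `C²` is central,
and bracketing with `z` maps `L` into `C²`, so the centralizer of `C¹` has dimension at least `3`
and contains some `x ∉ C¹`. Completing this `x` by any suitable `y`, the vectors `x`, `y`,
`z = [x, y]` and `w = [y, z]` span `L`, and all other brackets between them vanish.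
-/

theorem exists_notMem_of_finrank_lt {R M : Type*} [Semiring R] [StrongRankCondition R]
    [AddCommMonoid M] [Module R M] {U W : Submodule R M} [Module.Finite R U]
    (h : finrank R U < finrank R W) : ∃ x ∈ W, x ∉ U :=
  SetLike.not_le_iff_exists.mp fun hle => h.not_ge (Submodule.finrank_mono hle)

theorem exists_span_pair_sup_eq_top {K V : Type*} [DivisionRing K] [AddCommGroup V] [Module K V]
    [FiniteDimensional K V] {U : Submodule K V} (hU : finrank K V = finrank K U + 2) {x : V}
    (hx : x ∉ U) : ∃ y, Submodule.span K {x, y} ⊔ U = ⊤ := by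
  have hUx := Submodule.finrank_sup_span_singleton hx
  obtain ⟨y, -, hy⟩ := exists_notMem_of_finrank_lt (U := U ⊔ Submodule.span K {x}) (W := ⊤)
    (by rw [finrank_top]; omega)
  refine ⟨y, ?_⟩
  rw [Submodule.span_insert, sup_comm, ← sup_assoc, Submodule.eq_top_iff_finrank_eq,
    Submodule.finrank_sup_span_singleton hy, hUx, hU]

namespace SuperLie

variable {K : Type} [Field K] {A : SuperLie K}

section LowerCentralSeries

theorem lcs_succ (k : ℕ) : A.lcs (k + 1) = Submodule.map₂ A.br (A.lcs k) ⊤ := by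
  simp only [lcs, Submodule.map₂_eq_span_image2, Submodule.top_coe, Set.image2, Set.mem_univ,
    true_and, SetLike.mem_coe]

theorem derived_eq_lcs_one : A.derived = A.lcs 1 := by
  simp only [derived, lcs, Submodule.mem_top, true_and]

theorem br_mem_lcs_succ_of_left {k : ℕ} {x : A.carrier} (hx : x ∈ A.lcs k) (y : A.carrier) :
    A.br x y ∈ A.lcs (k + 1) :=
  Submodule.subset_span ⟨x, hx, y, rfl⟩

theorem lcs_antitone (A : SuperLie K) : Antitone A.lcs := by
  refine antitone_nat_of_succ_le fun k => ?_
  induction k with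
  | zero => exact le_top
  | succ k ih =>
    exact (lcs_succ (k + 1)).trans_le
      ((Submodule.map₂_le_map₂_left ih).trans_eq (lcs_succ k).symm)

theorem IsNilpotent.lcs_eq_bot_of_succ_eq (hnil : A.IsNilpotent) {k : ℕ}
    (h : A.lcs (k + 1) = A.lcs k) : A.lcs k = ⊥ := by
  have stable (m : ℕ) : A.lcs (k + m) = A.lcs k := by
    induction m with
    | zero => rfl
    | succ m ih => rw [← add_assoc, lcs_succ, ih, ← lcs_succ, h]
  obtain ⟨n, hn⟩ := hnil
  rw [eq_bot_iff, ← stable n, ← hn]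
  exact A.lcs_antitone (Nat.le_add_left n k)

theorem IsNilpotent.finrank_lcs_succ_le [FiniteDimensional K A.carrier] (hnil : A.IsNilpotent)
    (k : ℕ) : finrank K (A.lcs (k + 1)) ≤ finrank K (A.lcs k) - 1 := by
  rcases (A.lcs_antitone k.le_succ).eq_or_lt with h | h
  · rw [h, hnil.lcs_eq_bot_of_succ_eq h, finrank_bot]
  · exact Nat.le_sub_one_of_lt (Submodule.finrank_lt_finrank_of_lt h)

end LowerCentralSeries

section PurelyEven

theorem J_eq_self (hodd : A.oddPart = ⊥) (x : A.carrier) : A.J x = x := by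
  have hmem : A.J x - x ∈ A.oddPart := by simp [oddPart, A.J_inv]
  rw [hodd, Submodule.mem_bot] at hmem
  exact sub_eq_zero.mp hmem

theorem evenPart_eq_top (hodd : A.oddPart = ⊥) : A.evenPart = ⊤ :=
  Submodule.eq_top_iff'.mpr fun x => by simp [evenPart, J_eq_self hodd]

theorem br_swap (hodd : A.oddPart = ⊥) (x y : A.carrier) : A.br x y = -A.br y x :=
  A.skew_e x y (J_eq_self hodd x)

-- The vector `[x, x]` is fixed by `J` and equal to its own negative, so it is odd.
theorem br_self (hodd : A.oddPart = ⊥) (x : A.carrier) : A.br x x = 0 := by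
  have hmem : A.br x x ∈ A.oddPart := by
    have h := br_swap hodd x x
    simpa [oddPart, J_eq_self hodd] using eq_neg_iff_add_eq_zero.mp h
  rwa [hodd, Submodule.mem_bot] at hmem

theorem br_mem_lcs_succ_of_right (hodd : A.oddPart = ⊥) {k : ℕ} (x : A.carrier) {y : A.carrier}
    (hy : y ∈ A.lcs k) : A.br x y ∈ A.lcs (k + 1) := by
  rw [br_swap hodd]
  exact neg_mem (br_mem_lcs_succ_of_left hy x)

theorem map₂_br_span_pair (hodd : A.oddPart = ⊥) (x y : A.carrier) :
    Submodule.map₂ A.br (Submodule.span K {x, y}) (Submodule.span K {x, y}) =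
      Submodule.span K {A.br x y} := by
  have hxy := Submodule.mem_span_singleton_self (R := K) (A.br x y)
  apply le_antisymm
  · rw [Submodule.map₂_span_span, Submodule.span_le]
    rintro _ ⟨p, rfl | rfl, q, rfl | rfl, rfl⟩
    · simp only [br_self hodd, SetLike.mem_coe, zero_mem]
    · exact hxy
    · simpa only [SetLike.mem_coe, br_swap hodd p q] using neg_mem hxy
    · simp only [br_self hodd, SetLike.mem_coe, zero_mem]
  · rw [Submodule.span_singleton_le_iff_mem]
    exact Submodule.apply_mem_map₂ _ (Submodule.subset_span (by simp))
      (Submodule.subset_span (by simp))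

theorem span_br_sup_lcs_two (hodd : A.oddPart = ⊥) {x y : A.carrier}
    (hxy : Submodule.span K {x, y} ⊔ A.lcs 1 = ⊤) :
    Submodule.span K {A.br x y} ⊔ A.lcs 2 = A.lcs 1 := by
  set S := Submodule.span K {x, y} with hS
  have hS1 : Submodule.map₂ A.br S (A.lcs 1) ≤ A.lcs 2 :=
    Submodule.map₂_le.mpr fun p _ _ hd => br_mem_lcs_succ_of_right hodd p hd
  symm
  calc
    A.lcs 1 = Submodule.map₂ A.br (S ⊔ A.lcs 1) ⊤ := by rw [hxy]; exact lcs_succ 0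
    _ = Submodule.map₂ A.br S (S ⊔ A.lcs 1) ⊔ A.lcs 2 := by
      rw [Submodule.map₂_sup_left, ← lcs_succ, hxy]
    _ = Submodule.span K {A.br x y} ⊔ (Submodule.map₂ A.br S (A.lcs 1) ⊔ A.lcs 2) := by
      rw [Submodule.map₂_sup_right, hS, map₂_br_span_pair hodd, sup_assoc]
    _ = Submodule.span K {A.br x y} ⊔ A.lcs 2 := by rw [sup_eq_right.mpr hS1]

theorem span_br_pair_sup_lcs_three (hodd : A.oddPart = ⊥) {x y z : A.carrier}
    (hxy : Submodule.span K {x, y} ⊔ A.lcs 1 = ⊤)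
    (hz : Submodule.span K {z} ⊔ A.lcs 2 = A.lcs 1) :
    Submodule.span K {A.br z x, A.br z y} ⊔ A.lcs 3 = A.lcs 2 := by
  have hz1 : (A.lcs 1).map (A.br z) ≤ A.lcs 3 := by
    rw [← hz, Submodule.map_sup, Submodule.map_span, Set.image_singleton, br_self hodd,
      Submodule.span_zero_singleton, bot_sup_eq, Submodule.map_le_iff_le_comap]
    exact fun e he => br_mem_lcs_succ_of_right hodd z he
  symm
  calc
    A.lcs 2 = Submodule.map₂ A.br (Submodule.span K {z} ⊔ A.lcs 2) ⊤ := by rw [hz, lcs_succ]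
    _ = (Submodule.span K {x, y} ⊔ A.lcs 1).map (A.br z) ⊔ A.lcs 3 := by
      rw [Submodule.map₂_sup_left, Submodule.map₂_span_singleton_eq_map, ← lcs_succ, hxy]
    _ = Submodule.span K {A.br z x, A.br z y} ⊔ ((A.lcs 1).map (A.br z) ⊔ A.lcs 3) := by
      rw [Submodule.map_sup, Submodule.map_span, Set.image_pair, sup_assoc]
    _ = Submodule.span K {A.br z x, A.br z y} ⊔ A.lcs 3 := by rw [sup_eq_right.mpr hz1]

theorem exists_notMem_lcs_one_forall_br_eq_zero [FiniteDimensional K A.carrier]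
    (hodd : A.oddPart = ⊥) {z : A.carrier} (hz : Submodule.span K {z} ⊔ A.lcs 2 = A.lcs 1)
    (hlcs3 : A.lcs 3 = ⊥) (hlt : finrank K (A.lcs 1) + finrank K (A.lcs 2) < finrank K A.carrier) :
    ∃ x ∉ A.lcs 1, ∀ d ∈ A.lcs 1, A.br x d = 0 := by
  have hz1 : z ∈ A.lcs 1 := hz ▸ Submodule.mem_sup_left (Submodule.mem_span_singleton_self z)
  have range_le : LinearMap.range (A.br z) ≤ A.lcs 2 := by
    rintro _ ⟨p, rfl⟩
    exact br_mem_lcs_succ_of_left hz1 p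
  have rank_nullity := LinearMap.finrank_range_add_finrank_ker (A.br z)
  obtain ⟨x, hxz, hx⟩ := exists_notMem_of_finrank_lt (U := A.lcs 1) (W := LinearMap.ker (A.br z))
    (by have := Submodule.finrank_mono range_le; omega)
  have hx2 : A.lcs 2 ≤ LinearMap.ker (A.br x) := fun e he => by
    simpa only [hlcs3, Submodule.mem_bot, LinearMap.mem_ker] using
      br_mem_lcs_succ_of_right hodd x he
  refine ⟨x, hx, ?_⟩
  change A.lcs 1 ≤ LinearMap.ker (A.br x)
  rw [← hz, sup_le_iff, Submodule.span_singleton_le_iff_mem, LinearMap.mem_ker, br_swap hodd,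
    LinearMap.mem_ker.mp hxz, neg_zero]
  exact ⟨rfl, hx2⟩

theorem isL40_of_span_pair_sup_lcs_one_eq_top (hodd : A.oddPart = ⊥)
    (hdim : finrank K A.carrier = 4) (hlcs3 : A.lcs 3 = ⊥) {x y : A.carrier}
    (hxy : Submodule.span K {x, y} ⊔ A.lcs 1 = ⊤) (hx : ∀ d ∈ A.lcs 1, A.br x d = 0) :
    A.IsL40 := by
  set z := A.br x y
  set w := A.br y z
  have hz : z ∈ A.lcs 1 := br_mem_lcs_succ_of_left (k := 0) Submodule.mem_top y
  have hw : w ∈ A.lcs 2 := br_mem_lcs_succ_of_right hodd y hz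
  have br_w (p : A.carrier) : A.br p w = 0 := by
    simpa only [hlcs3, Submodule.mem_bot] using br_mem_lcs_succ_of_right hodd p hw
  have lcs_one_eq : Submodule.span K {z} ⊔ A.lcs 2 = A.lcs 1 := span_br_sup_lcs_two hodd hxy
  have lcs_two_eq : Submodule.span K {w} = A.lcs 2 := by
    rw [← span_br_pair_sup_lcs_three hodd hxy lcs_one_eq, hlcs3, sup_bot_eq, br_swap hodd z x,
      hx z hz, neg_zero, Submodule.span_insert_zero, br_swap hodd z y, ← Set.neg_singleton,
      Submodule.span_neg]
  have hspan : Submodule.span K {x, y, z, w} = ⊤ := by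
    rw [← hxy, ← lcs_one_eq, ← lcs_two_eq]
    simp only [Submodule.span_insert, sup_assoc]
  have hli : LinearIndependent K ![x, y, z, w] :=
    linearIndependent_of_top_le_span_of_card_eq_finrank
      (by simp only [Matrix.range_cons, Matrix.range_empty, Set.union_empty, Set.singleton_union,
        hspan, le_rfl]) (by simp [hdim])
  have heven (p : A.carrier) : p ∈ A.evenPart := evenPart_eq_top hodd ▸ Submodule.mem_top
  exact ⟨x, y, z, w, heven x, heven y, heven z, heven w, hli, hspan, rfl, rfl, hx z hz,
    br_w x, br_w y, br_w z⟩

end PurelyEven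

end SuperLie

theorem stmt13_general {K : Type} [Field K] (A : SuperLie K) (hnil : A.IsNilpotent)
    (hm : finrank K A.evenPart = 4) (hodd : A.oddPart = ⊥) (hd : finrank K A.derived = 2) :
    A.IsL40 := by
  have hdim : finrank K A.carrier = 4 := by rw [← hm, evenPart_eq_top hodd, finrank_top]
  have : FiniteDimensional K A.carrier := .of_finrank_pos (by omega)
  rw [derived_eq_lcs_one] at hd
  have hd2 : finrank K (A.lcs 2) ≤ 1 := by simpa only [hd] using hnil.finrank_lcs_succ_le 1
  have hd3 : finrank K (A.lcs 3) ≤ finrank K (A.lcs 2) - 1 := hnil.finrank_lcs_succ_le 2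
  have hlcs3 : A.lcs 3 = ⊥ := Submodule.finrank_eq_zero.mp (by omega)
  have exists_generator {x : A.carrier} (hx : x ∉ A.lcs 1) :
      ∃ y, Submodule.span K {x, y} ⊔ A.lcs 1 = ⊤ :=
    exists_span_pair_sup_eq_top (by omega) hx
  obtain ⟨x₀, -, hx₀⟩ := exists_notMem_of_finrank_lt (U := A.lcs 1) (W := ⊤)
    (by rw [finrank_top]; omega)
  obtain ⟨y₀, hxy₀⟩ := exists_generator hx₀
  obtain ⟨x, hx, hx1⟩ := exists_notMem_lcs_one_forall_br_eq_zero hodd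
    (span_br_sup_lcs_two hodd hxy₀) hlcs3 (by omega)
  obtain ⟨y, hxy⟩ := exists_generator hx
  exact isL40_of_span_pair_sup_lcs_one_eq_top hodd hdim hlcs3 hxy hx1

/-- A nilpotent Lie superalgebra of dimension `(4|0)` with
`dim Z(L) = 1` and `dim L' = 2` is isomorphic to `L_{4,0}`. -/
theorem stmt13 {K : Type} [Field K] (h2 : (2 : K) ≠ 0) (h3 : (3 : K) ≠ 0)
    (A : SuperLie K) [FiniteDimensional K A.carrier] (hnil : A.IsNilpotent)
    (hm : finrank K A.evenPart = 4) (hn : finrank K A.oddPart = 0)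
    (hz : finrank K A.center = 1) (hd : finrank K A.derived = 2) :
    A.IsL40 :=
  stmt13_general A hnil hm (Submodule.finrank_eq_zero.mp hn) hd
end
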